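/- Let D be an ADF and let v and w be strongly admissible interpretations of D. Then v ⊔_i w is the supremum of v and w in the set of strongly admissible interpretations of D ordered by ≤_i: v ⊔_i w is strongly admissible, v ≤_i v ⊔_i w, w ≤_i v ⊔_i w, and for every strongly admissible interpretation w' of D with v ≤_i w' and w ≤_i w' it holds that v ⊔_i w ≤_i w'. In particular, every two strongly admissible interpretations of D have a unique supremum among the strongly admissible interpretations. -/

import Mathlib

/-!
Two strongly admissible interpretations `v` and `w` never disagree on an argument that both decide
(`SJrel.agree`). Suppose `a` is justified under `v` by parents `P` and under `w` by parents `P'`.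
By induction on the justification under `v`, the two interpretations agree on `P ∩ P'`, so some
two-valued assignment completes both restrictions `v|_P` and `w|_P'` and evaluates the acceptance
condition of `a` to the value given by `v` as well as to the one given by `w`. Hence `joinI v w` is
the pointwise least upper bound of `v` and `w`. It is strongly admissible because justifications
persist when the interpretation gains information (`SJrel.mono`).
-/

/-- Three truth values: true, false, undecided. -/
inductive TV : Type
  | t | f | u
deriving DecidableEq, Repr

/-- The information order on truth values: u <_i t and u <_i f. -/
def TV.ile (x y : TV) : Prop := x = TV.u ∨ x = y

/-- The information order on interpretations, extended pointwise. -/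
def ILE {A : Type*} (v w : A → TV) : Prop := ∀ a, TV.ile (v a) (w a)

/-- An abstract dialectical framework on a set of arguments `A`:
each argument `a` has an acceptance condition `C a : (A → Bool) → Bool`. -/
structure ADF (A : Type*) where
  C : A → (A → Bool) → Bool

/-- The trivial interpretation mapping every argument to undecided. -/
def trivialInterp (A : Type*) : A → TV := fun _ => TV.u

/-- The parents of `a` are the arguments on which its acceptance condition depends. -/
def ADF.parents {A : Type*} [DecidableEq A] (D : ADF A) (a : A) : Set A :=
  {b | ∃ w : A → Bool, D.C a w ≠ D.C a (Function.update w b (!w b))}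

/-- A two-valued assignment `w` completes a three-valued interpretation `v`. -/
def Completes {A : Type*} (w : A → Bool) (v : A → TV) : Prop :=
  ∀ b, (v b = TV.t → w b = true) ∧ (v b = TV.f → w b = false)

/-- `φ` is irrefutable under `v`: every completion of `v` makes `φ` true. -/
def Irrefutable {A : Type*} (φ : (A → Bool) → Bool) (v : A → TV) : Prop :=
  ∀ w : A → Bool, Completes w v → φ w = true

/-- `φ` is unsatisfiable under `v`: every completion of `v` makes `φ` false. -/
def Unsat {A : Type*} (φ : (A → Bool) → Bool) (v : A → TV) : Prop :=
  ∀ w : A → Bool, Completes w v → φ w = false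

open Classical in
/-- The characteristic operator Γ_D of an ADF. -/
noncomputable def Gamma {A : Type*} (D : ADF A) (v : A → TV) : A → TV := fun a =>
  if Irrefutable (D.C a) v then TV.t
  else if Unsat (D.C a) v then TV.f
  else TV.u

open Classical in
/-- `v|_P`: agrees with `v` on `P` and is undecided elsewhere. -/
noncomputable def restrictTV {A : Type*} (v : A → TV) (P : Set A) : A → TV :=
  fun b => if b ∈ P then v b else TV.u

/-- Strong acceptability/deniability of an argument with respect to interpretation `v`
and set `S`, relative to an excluded set `E` (the first index). An argument `a` with
`v a = t` (resp. `v a = f`) is strongly acceptable (resp. strongly deniable) iff there is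
`P ⊆ (parents a ∩ S) \ E` with `φ_a^{v|_P}` irrefutable (resp. unsatisfiable) and every
`p ∈ P` strongly acceptable/deniable relative to `E ∪ {p}`. -/
inductive SJrel {A : Type*} [DecidableEq A] (D : ADF A) (v : A → TV) (S : Set A) :
    Set A → A → Prop
  | acc (E : Set A) (a : A) (P : Set A)
      (ha : v a = TV.t)
      (hP : P ⊆ (D.parents a ∩ S) \ E)
      (hirr : Irrefutable (D.C a) (restrictTV v P))
      (hrec : ∀ p ∈ P, SJrel D v S (E ∪ {p}) p) : SJrel D v S E a
  | den (E : Set A) (a : A) (P : Set A)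
      (ha : v a = TV.f)
      (hP : P ⊆ (D.parents a ∩ S) \ E)
      (hunsat : Unsat (D.C a) (restrictTV v P))
      (hrec : ∀ p ∈ P, SJrel D v S (E ∪ {p}) p) : SJrel D v S E a

/-- `a` is strongly acceptable/deniable w.r.t. `v` and `S`
(i.e., relative to the excluded set `{a}`). -/
def StronglyJustified {A : Type*} [DecidableEq A] (D : ADF A) (v : A → TV)
    (S : Set A) (a : A) : Prop :=
  SJrel D v S {a} a

/-- `S` is a least set for `a` with respect to `v`. -/
def LeastSet {A : Type*} [DecidableEq A] (D : ADF A) (v : A → TV)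
    (a : A) (S : Set A) : Prop :=
  StronglyJustified D v S a ∧
  ∀ S' : Set A, S'.ncard < S.ncard → ¬ StronglyJustified D v S' a

/-- An interpretation is strongly admissible iff every argument assigned `t`/`f`
is strongly acceptable/deniable w.r.t. `v` and some set `S`. -/
def StronglyAdmissible {A : Type*} [DecidableEq A] (D : ADF A) (v : A → TV) : Prop :=
  ∀ a : A, v a ≠ TV.u → ∃ S : Set A, StronglyJustified D v S a

/-- `g` is the grounded interpretation of `D`: the least fixed point of `Γ_D`. -/
def IsGrounded {A : Type*} (D : ADF A) (g : A → TV) : Prop :=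
  Gamma D g = g ∧ ∀ w : A → TV, Gamma D w = w → ILE g w

/-- An interpretation is admissible iff `v ≤_i Γ_D(v)`. -/
def Admissible {A : Type*} (D : ADF A) (v : A → TV) : Prop :=
  ILE v (Gamma D v)

/-- An interpretation is conflict-free. -/
def ConflictFree {A : Type*} (D : ADF A) (v : A → TV) : Prop :=
  ∀ a : A, (v a = TV.t → ∃ w : A → Bool, Completes w v ∧ D.C a w = true) ∧
           (v a = TV.f → Unsat (D.C a) v)

/-- The join of two interpretations: take `v`'s value where defined, else `w`'s. -/
def joinI {A : Type*} (v w : A → TV) : A → TV :=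
  fun a => if v a = TV.u then w a else v a

theorem ILE.eq_of_ne {A : Type*} {v w : A → TV} (h : ILE v w) {a : A} (ha : v a ≠ TV.u) :
    w a = v a :=
  ((h a).resolve_left ha).symm

theorem ILE.antisymm {A : Type*} {v w : A → TV} (h : ILE v w) (h' : ILE w v) : v = w := by
  funext a
  rcases h a with h1 | h1
  · rcases h' a with h2 | h2
    · rw [h1, h2]
    · exact h2.symm
  · exact h1

theorem Completes.restrict_of_ILE {A : Type*} {v w : A → TV} (h : ILE v w) {P : Set A}
    {x : A → Bool} (hx : Completes x (restrictTV w P)) : Completes x (restrictTV v P) := by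
  intro b
  have hb := hx b
  have hvw := h b
  unfold restrictTV TV.ile at *
  grind

/-- Restrictions that agree on the overlap of their domains have a common completion. -/
theorem exists_common_completion {A : Type*} {v w : A → TV} {P P' : Set A}
    (h : ∀ p ∈ P, p ∈ P' → v p = w p) :
    ∃ x : A → Bool, Completes x (restrictTV v P) ∧ Completes x (restrictTV w P') := by
  classical
  refine ⟨fun b => decide (restrictTV v P b = TV.t ∨ restrictTV w P' b = TV.t), ?_, ?_⟩ <;>
  · intro b
    have hb := h b
    unfold restrictTV
    grind

/-- Strong justification persists, with the same witnesses, under gain of information. -/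
theorem SJrel.mono {A : Type*} [DecidableEq A] {D : ADF A} {v w : A → TV} (hvw : ILE v w)
    {S E : Set A} {a : A} (h : SJrel D v S E a) : SJrel D w S E a := by
  induction h with
  | acc E a P ha hP hirr _ ih =>
    exact .acc E a P ((hvw.eq_of_ne (by simp [ha])).trans ha) hP
      (fun x hx => hirr x (hx.restrict_of_ILE hvw)) ih
  | den E a P ha hP hunsat _ ih =>
    exact .den E a P ((hvw.eq_of_ne (by simp [ha])).trans ha) hP
      (fun x hx => hunsat x (hx.restrict_of_ILE hvw)) ih

/-- Two strong justifications of the same argument, under arbitrary interpretations, give it the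
same value. -/
theorem SJrel.agree {A : Type*} [DecidableEq A] {D : ADF A} {v w : A → TV} {S S' E E' : Set A}
    {a : A} (h : SJrel D v S E a) (h' : SJrel D w S' E' a) : v a = w a := by
  induction h generalizing E' with
  | acc E a P ha hP hirr _ ih =>
    cases h' with
    | acc _ _ P' ha' => rw [ha, ha']
    | den _ _ P' ha' hP' hunsat hrec' =>
      obtain ⟨x, hx, hx'⟩ := exists_common_completion
        (fun p hp hp' => ih p hp (hrec' p hp'))
      exact absurd ((hirr x hx).symm.trans (hunsat x hx')) (by simp)
  | den E a P ha hP hunsat _ ih =>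
    cases h' with
    | den _ _ P' ha' => rw [ha, ha']
    | acc _ _ P' ha' hP' hirr hrec' =>
      obtain ⟨x, hx, hx'⟩ := exists_common_completion
        (fun p hp hp' => ih p hp (hrec' p hp'))
      exact absurd ((hirr x hx').symm.trans (hunsat x hx)) (by simp)

theorem ILE_joinI_left {A : Type*} (v w : A → TV) : ILE v (joinI v w) := by
  intro a
  unfold TV.ile joinI
  grind

theorem ILE_joinI_right {A : Type*} [DecidableEq A] {D : ADF A} {v w : A → TV}
    (hv : StronglyAdmissible D v) (hw : StronglyAdmissible D w) : ILE w (joinI v w) := by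
  intro a
  by_cases hwa : w a = TV.u
  · exact Or.inl hwa
  · refine Or.inr ?_
    by_cases hva : v a = TV.u
    · simp [joinI, hva]
    · obtain ⟨_, h⟩ := hv a hva
      obtain ⟨_, h'⟩ := hw a hwa
      simpa [joinI, hva] using (h.agree h').symm

theorem joinI_ILE {A : Type*} {v w z : A → TV} (hv : ILE v z) (hw : ILE w z) :
    ILE (joinI v w) z := by
  intro a
  by_cases hva : v a = TV.u
  · simpa [joinI, hva] using hw a
  · simpa [joinI, hva] using hv a

theorem StronglyAdmissible.joinI {A : Type*} [DecidableEq A] {D : ADF A} {v w : A → TV}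
    (hv : StronglyAdmissible D v) (hw : StronglyAdmissible D w) :
    StronglyAdmissible D (joinI v w) := by
  intro a ha
  by_cases hva : v a = TV.u
  · obtain ⟨S, h⟩ := hw a (by simpa [_root_.joinI, hva] using ha)
    exact ⟨S, h.mono (ILE_joinI_right hv hw)⟩
  · obtain ⟨S, h⟩ := hv a hva
    exact ⟨S, h.mono (ILE_joinI_left v w)⟩


/-- The join of two strongly admissible interpretations is their
unique supremum among the strongly admissible interpretations. -/
theorem join_is_supremum {A : Type*} [Fintype A] [DecidableEq A]
    (D : ADF A) (v w : A → TV)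
    (hv : StronglyAdmissible D v) (hw : StronglyAdmissible D w) :
    StronglyAdmissible D (joinI v w) ∧
      ILE v (joinI v w) ∧ ILE w (joinI v w) ∧
      (∀ w' : A → TV, StronglyAdmissible D w' → ILE v w' → ILE w w' →
        ILE (joinI v w) w') ∧
      ∀ s : A → TV,
        (StronglyAdmissible D s ∧ ILE v s ∧ ILE w s ∧
          ∀ w' : A → TV, StronglyAdmissible D w' → ILE v w' → ILE w w' → ILE s w') →
        s = joinI v w := by
  have hl := ILE_joinI_left v w
  have hr := ILE_joinI_right hv hw
  refine ⟨hv.joinI hw, hl, hr, fun _ _ => joinI_ILE, ?_⟩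
  rintro s ⟨_, hvs, hws, hmin⟩
  exact (hmin _ (hv.joinI hw) hl hr).antisymm (joinI_ILE hvs hws)
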